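/- Let A be a finite type with at least two elements, let n ≥ 3, and let f be any permutation of (Fin n → A). Let F be the permutation of (Fin (n+1) → A) that acts as f on the first n coordinates and leaves the last coordinate unchanged (i.e., F is f ⊕ id₁, the computation of f using one borrowed bit). Then F belongs to the subgroup of Perm(Fin (n+1) → A) generated by the applications, along injections ι : Fin 4 ↪ Fin (n+1), of permutations of (Fin 4 → A). In words: every permutation of Aⁿ can be computed with one borrowed symbol by a circuit built from 4-ary gates. -/

import Mathlib

/-- Extension of an operation on `m`-letter words to `n`-letter words along an
injection of coordinates: apply `F` on the coordinates selected by `ι`, leave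
the rest unchanged. -/
noncomputable def extWord {A : Type*} {m n : ℕ} (ι : Fin m ↪ Fin n)
    (F : (Fin m → A) → (Fin m → A)) (x : Fin n → A) : Fin n → A :=
  fun k => if h : ∃ j, ι j = k then F (x ∘ ι) h.choose else x k

theorem extWord_comp {A : Type*} {m n : ℕ} (ι : Fin m ↪ Fin n)
    (F : (Fin m → A) → (Fin m → A)) (x : Fin n → A) :
    (extWord ι F x) ∘ ι = F (x ∘ ι) := by
  funext j
  have h : ∃ j', ι j' = ι j := ⟨j, rfl⟩
  simp only [Function.comp_apply, extWord, dif_pos h]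
  congr 1
  exact ι.injective h.choose_spec

/-- The application of a gate `f` of arity `m` along an injection `ι : Fin m ↪ Fin n`:
the resulting permutation `g` of words of length `n` satisfies
`(g x) (ι j) = (f (x ∘ ι)) j` for all `j : Fin m`, and `g x k = x k` for every
coordinate `k` outside the range of `ι`. -/
noncomputable def applyAlong {A : Type*} {m n : ℕ} (f : Equiv.Perm (Fin m → A))
    (ι : Fin m ↪ Fin n) : Equiv.Perm (Fin n → A) where
  toFun := extWord ι f
  invFun := extWord ι f.symm
  left_inv x := by
    funext k
    by_cases h : ∃ j, ι j = k
    · obtain ⟨j, rfl⟩ := h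
      have hj : extWord ι (⇑f.symm) (extWord ι (⇑f) x) (ι j)
          = ((extWord ι (⇑f.symm) (extWord ι (⇑f) x)) ∘ ι) j := rfl
      rw [hj, extWord_comp, extWord_comp]
      simp
    · simp only [extWord, dif_neg h]
  right_inv x := by
    funext k
    by_cases h : ∃ j, ι j = k
    · obtain ⟨j, rfl⟩ := h
      have hj : extWord ι (⇑f) (extWord ι (⇑f.symm) x) (ι j)
          = ((extWord ι (⇑f) (extWord ι (⇑f.symm) x)) ∘ ι) j := rfl
      rw [hj, extWord_comp, extWord_comp]
      simp
    · simp only [extWord, dif_neg h]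

/-!
For `k ≥ 3`, the `k`-ary gates generate every even permutation of words of length `n ≥ k`.  This
is an induction on `n`.  Given the even permutations of any `n` of the `n + 1` letters, two moves
send any pair of distinct words to a fixed pair of constant words, so the generated group is
2-transitive.  It contains a 3-cycle, namely the commutator of two copies of a suitable 3-cycle of
`n`-letter words, one acting on the first `n` and one on the last `n` letters.  Jordan's theorem
then yields the alternating group.

Parity is the only remaining obstruction.  If `|A|` is even, a permutation that ignores at least
one letter is even.  If `|A|` is odd, a transposition of `k`-letter words is an odd permutation of
`n`-letter words, so the gates generate everything.
-/

section Group

open scoped commutatorElement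

variable {X : Type*} [DecidableEq X]

theorem commutator_eq_swap_mul_swap {s t : Equiv.Perm X} {p : X} (hs : s p ≠ p) (ht : t p ≠ p)
    (h : ∀ x, s x ≠ x → t x ≠ x → x = p) :
    ⁅s, t⁆ = Equiv.swap p (t p) * Equiv.swap p (s p) := by
  have hts : t (s p) = s p := by_contra fun h' => hs (h _ (s.injective.ne hs) h')
  have hst : s (t p) = t p := by_contra fun h' => ht (h _ h' (t.injective.ne ht))
  have hne : s p ≠ t p := fun hst' => hs (t.injective (hts.trans hst'))
  rw [commutatorElement_def, mul_inv_eq_iff_eq_mul, mul_inv_eq_iff_eq_mul]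
  ext x
  simp only [Equiv.Perm.mul_apply]
  by_cases hsx : s x = x
  · by_cases htx : t x = x
    · grind [s.injective.eq_iff, t.injective.eq_iff]
    · grind [t.injective.eq_iff]
  · by_cases htx : t x = x
    · grind [s.injective.eq_iff]
    · grind

variable [Fintype X]

theorem isThreeCycle_commutator {s t : Equiv.Perm X} {p : X} (hs : s p ≠ p) (ht : t p ≠ p)
    (h : ∀ x, s x ≠ x → t x ≠ x → x = p) : ⁅s, t⁆.IsThreeCycle := by
  rw [commutator_eq_swap_mul_swap hs ht h]
  refine Equiv.Perm.isThreeCycle_swap_mul_swap_same ht.symm hs.symm fun hts => ht (h _ ?_ ?_)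
  · exact hts ▸ s.injective.ne hs
  · exact t.injective.ne ht

theorem exists_mem_alternatingGroup_apply_eq_apply_eq (hX : 4 ≤ Fintype.card X) {a b c d : X}
    (hab : a ≠ b) (hcd : c ≠ d) : ∃ s ∈ alternatingGroup X, s a = c ∧ s b = d := by
  have := alternatingGroup.isMultiplyPretransitive X
  have h2 : MulAction.IsMultiplyPretransitive (alternatingGroup X) X 2 :=
    MulAction.isMultiplyPretransitive_of_le (n := Nat.card X - 2)
      (by rw [Nat.card_eq_fintype_card]; lia) (Nat.sub_le _ _)
  obtain ⟨s, hs⟩ := MulAction.is_two_pretransitive_iff.mp h2 hab hcd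
  exact ⟨s, s.2, hs⟩

theorem eq_top_of_alternatingGroup_le_of_odd_mem {G : Subgroup (Equiv.Perm X)}
    (hG : alternatingGroup X ≤ G) {w : Equiv.Perm X} (hw : w ∈ G)
    (hsign : Equiv.Perm.sign w = -1) : G = ⊤ := by
  refine (Subgroup.eq_top_iff' G).mpr fun f => ?_
  rcases Int.units_eq_one_or (Equiv.Perm.sign f) with hf | hf
  · exact hG hf
  · refine (Subgroup.mul_mem_cancel_right G hw).mp (hG ?_)
    rw [Equiv.Perm.mem_alternatingGroup, Equiv.Perm.sign_mul, hf, hsign, neg_one_mul, neg_neg]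

end Group

section ApplyAlong

variable {A : Type*} {k m n : ℕ}

theorem applyAlong_comp (f : Equiv.Perm (Fin m → A)) (ι : Fin m ↪ Fin n) (x : Fin n → A) :
    applyAlong f ι x ∘ ι = f (x ∘ ι) :=
  extWord_comp ι f x

theorem applyAlong_apply_of_notMem_range (f : Equiv.Perm (Fin m → A)) {ι : Fin m ↪ Fin n}
    (x : Fin n → A) {i : Fin n} (hi : i ∉ Set.range ι) : applyAlong f ι x i = x i :=
  dif_neg hi

theorem applyAlong_eq_iff {f : Equiv.Perm (Fin m → A)} {ι : Fin m ↪ Fin n} {x y : Fin n → A} :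
    applyAlong f ι x = y ↔ f (x ∘ ι) = y ∘ ι ∧ ∀ i ∉ Set.range ι, x i = y i := by
  constructor
  · rintro rfl
    exact ⟨(applyAlong_comp f ι x).symm,
      fun i hi => (applyAlong_apply_of_notMem_range f x hi).symm⟩
  · rintro ⟨hrange, hoff⟩
    funext i
    by_cases hi : i ∈ Set.range ι
    · obtain ⟨j, rfl⟩ := hi
      exact congrFun ((applyAlong_comp f ι x).trans hrange) j
    · exact (applyAlong_apply_of_notMem_range f x hi).trans (hoff i hi)

theorem applyAlong_eq_self_iff {f : Equiv.Perm (Fin m → A)} {ι : Fin m ↪ Fin n}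
    {x : Fin n → A} : applyAlong f ι x = x ↔ f (x ∘ ι) = x ∘ ι := by
  simp [applyAlong_eq_iff]

theorem applyAlong_refl (f : Equiv.Perm (Fin n → A)) :
    applyAlong f (Function.Embedding.refl _) = f :=
  Equiv.ext fun _ => applyAlong_eq_iff.mpr ⟨rfl, fun i hi => absurd ⟨i, rfl⟩ hi⟩

theorem applyAlong_mul (f g : Equiv.Perm (Fin m → A)) (ι : Fin m ↪ Fin n) :
    applyAlong (f * g) ι = applyAlong f ι * applyAlong g ι := by
  refine Equiv.ext fun x => applyAlong_eq_iff.mpr ⟨?_, fun i hi => ?_⟩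
  · simp only [Equiv.Perm.mul_apply, applyAlong_comp]
  · simp only [Equiv.Perm.mul_apply, applyAlong_apply_of_notMem_range _ _ hi]

theorem applyAlong_applyAlong (f : Equiv.Perm (Fin k → A)) (κ : Fin k ↪ Fin m)
    (ι : Fin m ↪ Fin n) : applyAlong (applyAlong f κ) ι = applyAlong f (κ.trans ι) := by
  refine Equiv.ext fun x => applyAlong_eq_iff.mpr
    ⟨applyAlong_eq_iff.mpr ⟨(applyAlong_comp f (κ.trans ι) x).symm, fun j hj => ?_⟩, fun i hi => ?_⟩
  · refine (applyAlong_apply_of_notMem_range f x ?_).symm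
    rintro ⟨l, hl⟩
    exact hj ⟨l, ι.injective hl⟩
  · refine (applyAlong_apply_of_notMem_range f x ?_).symm
    rintro ⟨l, hl⟩
    exact hi ⟨κ l, hl⟩

theorem applyAlong_succAboveEmb_insertNth (f : Equiv.Perm (Fin n → A)) (p : Fin (n + 1)) (a : A)
    (w : Fin n → A) :
    applyAlong f p.succAboveEmb (p.insertNth a w) = p.insertNth a (f w) := by
  refine applyAlong_eq_iff.mpr ⟨?_, fun i hi => ?_⟩
  · have hcomp (v : Fin n → A) : (p.insertNth a v : Fin (n + 1) → A) ∘ p.succAboveEmb = v :=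
      funext fun l => Fin.insertNth_apply_succAbove (α := fun _ => A) p a v l
    rw [hcomp, hcomp]
  · obtain rfl : i = p := by simpa [Fin.range_succAbove] using hi
    simp only [Fin.insertNth_apply_same]

theorem removeNth_ne_removeNth {p i : Fin (n + 1)} (hip : i ≠ p) {x y : Fin (n + 1) → A}
    (hxy : x i ≠ y i) : p.removeNth x ≠ p.removeNth y := by
  obtain ⟨l, rfl⟩ := Fin.exists_succAbove_eq hip
  exact fun h => hxy (congrFun h l)

/-- Splitting a word into its letters at the coordinates in the range of `ι` and its letters at
the remaining coordinates; this turns `applyAlong f ι` into `f × id`. -/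
noncomputable def splitWord (A : Type*) (ι : Fin m ↪ Fin n) :
    (Fin n → A) ≃ (Fin m → A) × ({i // i ∉ Set.range ι} → A) :=
  open scoped Classical in
  (Equiv.piEquivPiSubtypeProd (· ∈ Set.range ι) _).trans
    (((Equiv.ofInjective ι ι.injective).arrowCongr (Equiv.refl A)).symm.prodCongr (Equiv.refl _))

theorem sign_applyAlong [Fintype A] [DecidableEq A] (f : Equiv.Perm (Fin m → A))
    (ι : Fin m ↪ Fin n) :
    Equiv.Perm.sign (applyAlong f ι) = Equiv.Perm.sign f ^ Fintype.card A ^ (n - m) := by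
  classical
  have hsplit : (splitWord A ι).permCongr (applyAlong f ι) = Equiv.prodCongrLeft fun _ => f := by
    ext1 w
    obtain ⟨x, rfl⟩ := (splitWord A ι).surjective w
    rw [Equiv.permCongr_apply, Equiv.symm_apply_apply]
    exact Prod.ext (applyAlong_comp f ι x)
      (funext fun i => applyAlong_apply_of_notMem_range f x i.2)
  have hcard : Fintype.card {i // i ∉ Set.range ι} = n - m := by
    rw [Fintype.card_subtype_compl, Fintype.card_fin, Set.card_range_of_injective ι.injective,
      Fintype.card_fin]
  rw [← Equiv.Perm.sign_permCongr (splitWord A ι), hsplit, Equiv.Perm.sign_prodCongrLeft,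
    Finset.prod_const, Finset.card_univ, Fintype.card_fun, hcard]

end ApplyAlong

section OmittedCoordinate

variable {A : Type*} [Fintype A] [DecidableEq A] {n : ℕ}

theorem exists_mem_alternatingGroup_apply_const_ne {z o : A} (hzo : z ≠ o) (n : ℕ) :
    ∃ s ∈ alternatingGroup (Fin (n + 3) → A), s (fun _ => z) ≠ (fun _ => z) ∧
      ∀ w, s w ≠ w → w 2 = z ∧ (w 1 = z → w = fun _ => z) := by
  set c : Fin (n + 3) → A := fun _ => z with hc
  set u := Function.update c 1 o with hu
  set v := Function.update u 0 o with hv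
  have hcu : c ≠ u := fun h => hzo (by simpa [hu, hc] using congrFun h 1)
  have hcv : c ≠ v := fun h => hzo (by simpa [hv, hc] using congrFun h 0)
  have huv : u ≠ v := fun h => hzo (by simpa [hv, hu, hc] using congrFun h 0)
  refine ⟨Equiv.swap c u * Equiv.swap c v,
    (Equiv.Perm.isThreeCycle_swap_mul_swap_same hcu hcv huv).mem_alternatingGroup, ?_, ?_⟩
  · rw [Equiv.Perm.mul_apply, Equiv.swap_apply_left,
      Equiv.swap_apply_of_ne_of_ne hcv.symm huv.symm]
    exact hcv.symm
  · intro w hw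
    have hmem : w = c ∨ w = u ∨ w = v := by
      by_contra! hne
      exact hw (by rw [Equiv.Perm.mul_apply, Equiv.swap_apply_of_ne_of_ne hne.1 hne.2.2,
        Equiv.swap_apply_of_ne_of_ne hne.1 hne.2.1])
    have h20 : (2 : Fin (n + 3)) ≠ 0 := by simp [Fin.ext_iff, Nat.mod_eq_of_lt]
    have h21 : (2 : Fin (n + 3)) ≠ 1 := by simp [Fin.ext_iff, Nat.mod_eq_of_lt]
    rcases hmem with rfl | rfl | rfl <;> simp [hv, hu, hc, hzo.symm, h20, h21]

/-- `G` contains every even permutation of the subwords obtained by omitting the letter at `p`. -/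
def ContainsEvenOmitting (G : Subgroup (Equiv.Perm (Fin (n + 1) → A))) (p : Fin (n + 1)) : Prop :=
  ∀ s ∈ alternatingGroup (Fin n → A), applyAlong s p.succAboveEmb ∈ G

variable {G : Subgroup (Equiv.Perm (Fin (n + 1) → A))} {p : Fin (n + 1)}

theorem exists_isThreeCycle_mem_of_omitting [Nontrivial A] (hn : 3 ≤ n)
    (hG : ContainsEvenOmitting G 0) (hG' : ContainsEvenOmitting G (Fin.last n)) :
    ∃ g ∈ G, g.IsThreeCycle := by
  obtain ⟨l, rfl⟩ := Nat.exists_eq_add_of_le' hn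
  obtain ⟨z, o, hzo⟩ := exists_pair_ne A
  obtain ⟨s, hs, hsz, hmoved⟩ := exists_mem_alternatingGroup_apply_const_ne hzo l
  have hinit := hG' s hs
  have htail := hG s hs
  refine ⟨_, mul_mem (mul_mem (mul_mem hinit htail) (inv_mem hinit)) (inv_mem htail),
    isThreeCycle_commutator (p := fun _ => z) ?_ ?_ fun x hx hx' => ?_⟩
  · exact applyAlong_eq_self_iff.not.mpr hsz
  · exact applyAlong_eq_self_iff.not.mpr hsz
  · -- The subwords of `x` omitting its last and its first letter share the letter `x 2`.
    obtain ⟨hx2, hinit_eq⟩ := hmoved _ (applyAlong_eq_self_iff.not.mp hx)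
    obtain ⟨-, htail_eq⟩ := hmoved _ (applyAlong_eq_self_iff.not.mp hx')
    have htail_z : ∀ i : Fin (l + 3), x i.succ = z := congrFun (htail_eq hx2)
    have hinit_z : ∀ i : Fin (l + 3), x i.castSucc = z := fun i => by
      simpa using congrFun (hinit_eq (htail_z 0)) i
    exact funext (Fin.cases (hinit_z 0) htail_z)

theorem exists_mem_insertNth_eq (hn : 2 ≤ n) (hG : ContainsEvenOmitting G p)
    {x y : Fin (n + 1) → A} (hxy : p.removeNth x ≠ p.removeNth y) {u v : Fin n → A} (huv : u ≠ v) :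
    ∃ g ∈ G, g x = p.insertNth (x p) u ∧ g y = p.insertNth (y p) v := by
  obtain ⟨i, hi⟩ := Function.ne_iff.mp huv
  have : Nontrivial A := nontrivial_of_ne _ _ hi
  have hcard : 4 ≤ Fintype.card (Fin n → A) := by
    rw [Fintype.card_fun, Fintype.card_fin]
    calc 2 ^ 2 ≤ Fintype.card A ^ 2 := Nat.pow_le_pow_left Fintype.one_lt_card 2
      _ ≤ Fintype.card A ^ n := Nat.pow_le_pow_right Fintype.card_pos hn
  obtain ⟨s, hs, hsx, hsy⟩ := exists_mem_alternatingGroup_apply_eq_apply_eq hcard hxy huv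
  have happly (w : Fin (n + 1) → A) :
      applyAlong s p.succAboveEmb w = p.insertNth (w p) (s (p.removeNth w)) := by
    rw [← applyAlong_succAboveEmb_insertNth, Fin.insertNth_self_removeNth]
  exact ⟨_, hG s hs, by rw [happly, hsx], by rw [happly, hsy]⟩

theorem exists_mem_apply_eq_const (hn : 2 ≤ n) (hG : ∀ p, ContainsEvenOmitting G p)
    {z o : A} (hzo : z ≠ o) {x y : Fin (n + 1) → A} (hxy : x ≠ y) :
    ∃ g ∈ G, g x = (fun _ => z) ∧ g y = (fun _ => o) := by
  obtain ⟨i, hi⟩ := Function.ne_iff.mp hxy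
  obtain ⟨j, hji, -⟩ := Fin.exists_ne_and_ne_of_two_lt i i (by lia)
  obtain ⟨l, hli, hlj⟩ := Fin.exists_ne_and_ne_of_two_lt i j (by lia)
  have : NeZero n := ⟨by lia⟩
  have hconst : (fun _ : Fin n => z) ≠ fun _ => o := fun h => hzo (congrFun h 0)
  obtain ⟨g, hg, hgx, hgy⟩ := exists_mem_insertNth_eq hn (hG j)
    (removeNth_ne_removeNth hji.symm hi) hconst
  have hoff (a b : A) {q : Fin (n + 1)} (hq : q ≠ j) :
      (j.insertNth a fun _ => b : Fin (n + 1) → A) q = b := by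
    obtain ⟨r, rfl⟩ := Fin.exists_succAbove_eq hq
    exact Fin.insertNth_apply_succAbove (α := fun _ => A) j a _ r
  -- The second move repairs the letter at `j`; the letters at `l` keep the two words distinct.
  obtain ⟨h, hh, hhx, hhy⟩ := exists_mem_insertNth_eq (x := g x) (y := g y) hn (hG i)
    (removeNth_ne_removeNth hli (by rwa [hgx, hgy, hoff _ _ hlj, hoff _ _ hlj])) hconst
  refine ⟨h * g, mul_mem hh hg, ?_, ?_⟩
  · rw [Equiv.Perm.mul_apply, hhx, hgx, hoff _ _ hji.symm]
    exact Fin.insertNth_eq_iff.mpr ⟨rfl, rfl⟩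
  · rw [Equiv.Perm.mul_apply, hhy, hgy, hoff _ _ hji.symm]
    exact Fin.insertNth_eq_iff.mpr ⟨rfl, rfl⟩

theorem isMultiplyPretransitive_two_of_omitting [Nontrivial A] (hn : 2 ≤ n)
    (hG : ∀ p, ContainsEvenOmitting G p) :
    MulAction.IsMultiplyPretransitive G (Fin (n + 1) → A) 2 := by
  obtain ⟨z, o, hzo⟩ := exists_pair_ne A
  refine MulAction.is_two_pretransitive_iff.mpr fun {a b c d} hab hcd => ?_
  obtain ⟨g, hg, hga, hgb⟩ := exists_mem_apply_eq_const hn hG hzo hab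
  obtain ⟨h, hh, hhc, hhd⟩ := exists_mem_apply_eq_const hn hG hzo hcd
  exact ⟨⟨h⁻¹ * g, mul_mem (inv_mem hh) hg⟩,
    Equiv.Perm.inv_eq_iff_eq.mpr (hga.trans hhc.symm),
    Equiv.Perm.inv_eq_iff_eq.mpr (hgb.trans hhd.symm)⟩

theorem alternatingGroup_le_of_omitting [Nontrivial A] (hn : 3 ≤ n)
    (hG : ∀ p, ContainsEvenOmitting G p) :
    alternatingGroup (Fin (n + 1) → A) ≤ G := by
  obtain ⟨g, hg, hcycle⟩ := exists_isThreeCycle_mem_of_omitting hn (hG 0) (hG (Fin.last n))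
  exact Equiv.Perm.alternatingGroup_le_of_isPreprimitive_of_isThreeCycle_mem
    (MulAction.isPreprimitive_of_is_two_pretransitive
      (isMultiplyPretransitive_two_of_omitting (by lia) hG)) hcycle hg

end OmittedCoordinate

section GateGroup

/-- The permutations of `n`-letter words computed by circuits of `k`-ary gates. -/
def gateGroup (k : ℕ) (A : Type*) (n : ℕ) : Subgroup (Equiv.Perm (Fin n → A)) :=
  Subgroup.closure {σ | ∃ (g : Equiv.Perm (Fin k → A)) (ι : Fin k ↪ Fin n), σ = applyAlong g ι}

variable {A : Type*} {k m n : ℕ}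

theorem applyAlong_mem_gateGroup (g : Equiv.Perm (Fin k → A)) (ι : Fin k ↪ Fin n) :
    applyAlong g ι ∈ gateGroup k A n :=
  Subgroup.subset_closure ⟨g, ι, rfl⟩

theorem applyAlong_mem_gateGroup_of_mem {f : Equiv.Perm (Fin m → A)} (hf : f ∈ gateGroup k A m)
    (ι : Fin m ↪ Fin n) : applyAlong f ι ∈ gateGroup k A n := by
  let applyHom : Equiv.Perm (Fin m → A) →* Equiv.Perm (Fin n → A) :=
    MonoidHom.mk' (applyAlong · ι) fun f g => applyAlong_mul f g ι
  suffices gateGroup k A m ≤ (gateGroup k A n).comap applyHom from this hf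
  refine (Subgroup.closure_le _).mpr ?_
  rintro _ ⟨g, κ, rfl⟩
  change applyAlong (applyAlong g κ) ι ∈ gateGroup k A n
  rw [applyAlong_applyAlong]
  exact applyAlong_mem_gateGroup g _

variable [Fintype A]

theorem alternatingGroup_le_gateGroup [DecidableEq A] [Nontrivial A] (hk : 3 ≤ k) (hkn : k ≤ n) :
    alternatingGroup (Fin n → A) ≤ gateGroup k A n := by
  induction n, hkn using Nat.le_induction with
  | base =>
    intro g _
    rw [← applyAlong_refl g]
    exact applyAlong_mem_gateGroup g _
  | succ n hkn ih =>
    exact alternatingGroup_le_of_omitting (hk.trans hkn) fun p s hs =>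
      applyAlong_mem_gateGroup_of_mem (ih hs) p.succAboveEmb

theorem gateGroup_eq_top_of_odd_card [Nontrivial A] (hA : Odd (Fintype.card A)) (hk : 3 ≤ k)
    (hkn : k ≤ n) : gateGroup k A n = ⊤ := by
  classical
  have : NeZero k := ⟨by lia⟩
  obtain ⟨z, o, hzo⟩ := exists_pair_ne (Fin k → A)
  refine eq_top_of_alternatingGroup_le_of_odd_mem (alternatingGroup_le_gateGroup hk hkn)
    (applyAlong_mem_gateGroup (Equiv.swap z o) (Fin.castLEEmb hkn)) ?_
  rw [sign_applyAlong, Equiv.Perm.sign_swap hzo, hA.pow.neg_one_pow]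

theorem applyAlong_mem_alternatingGroup_of_even_card [DecidableEq A] (hA : Even (Fintype.card A))
    (hmn : m < n) (f : Equiv.Perm (Fin m → A)) (ι : Fin m ↪ Fin n) :
    applyAlong f ι ∈ alternatingGroup (Fin n → A) := by
  obtain ⟨e, he⟩ : Even (Fintype.card A ^ (n - m)) := hA.pow_of_ne_zero (by lia)
  rw [Equiv.Perm.mem_alternatingGroup, sign_applyAlong, he, pow_add, ← mul_pow,
    Int.units_mul_self, one_pow]

end GateGroup

theorem borrowed_symbol_fourAry_gates_general {A : Type*} [Finite A] {k m n : ℕ} (hk : 3 ≤ k)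
    (hkn : k ≤ n) (hmn : m < n) (f : Equiv.Perm (Fin m → A)) (ι : Fin m ↪ Fin n) :
    applyAlong f ι ∈ gateGroup k A n := by
  classical
  cases nonempty_fintype A
  rcases subsingleton_or_nontrivial A with _ | _
  · exact Subsingleton.elim 1 (applyAlong f ι) ▸ one_mem _
  rcases Nat.even_or_odd (Fintype.card A) with hA | hA
  · exact alternatingGroup_le_gateGroup hk hkn
      (applyAlong_mem_alternatingGroup_of_even_card hA hmn f ι)
  · rw [gateGroup_eq_top_of_odd_card hA hk hkn]
    exact Subgroup.mem_top _

/-- **One borrowed symbol suffices** (Corollary 12 of the paper).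
Let `A` be a finite type with at least two elements, `n ≥ 3` and `f` any permutation of
`Fin n → A`.  The permutation `f ⊕ id₁` of `Fin (n+1) → A` — acting as `f` on the first
`n` coordinates and fixing the last coordinate — lies in the subgroup of
`Perm (Fin (n+1) → A)` generated by the applications, along injections
`ι : Fin 4 ↪ Fin (n+1)`, of permutations of `Fin 4 → A`.  That is, every permutation of
`Aⁿ` can be computed with one borrowed symbol by a circuit built from 4-ary gates. -/
theorem borrowed_symbol_fourAry_gates
    {A : Type*} [Fintype A] [DecidableEq A] (hA : 1 < Fintype.card A)
    (n : ℕ) (hn : 3 ≤ n) (f : Equiv.Perm (Fin n → A)) :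
    applyAlong f Fin.castSuccEmb ∈ Subgroup.closure
      {σ : Equiv.Perm (Fin (n + 1) → A) |
        ∃ (g : Equiv.Perm (Fin 4 → A)) (ι : Fin 4 ↪ Fin (n + 1)),
          σ = applyAlong g ι} :=
  borrowed_symbol_fourAry_gates_general (by lia) (by lia) n.lt_succ_self f Fin.castSuccEmb
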